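/- With h = (h_1, 0,...,0)ᵀ, f = (f_1,...,f_{J+1})ᵀ, Γ diagonal with positive entries d_1 = σ_1² and d_i = σ_i² + q_i for i ≥ 2, and p_1, p_u > 0, the quantity γ_{1,QF2} = p_1 hᴴ(p_u f fᴴ + Γ)^{-1} h equals (p_1|h_1|²/σ_1²)·(1 − p_u|f_1|²/(σ_1² + p_u|f_1|² + p_u σ_1² Σ_{i=2}^{J+1} |f_i|²/(σ_i² + q_i))). -/

import Mathlib

open Matrix

/-!
By the Sherman–Morrison formula, a rank-one update changes the `(i, i)` entry of the inverse of
`diag(d)` from `1 / dᵢ` to `(1 / dᵢ) (1 - uᵢ vᵢ / (dᵢ (1 + ∑ₖ uₖ vₖ / dₖ)))`. As `h` is supported on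
one coordinate, `hᴴ (p_u f fᴴ + Γ)⁻¹ h` sees only such an entry; splitting the `k = i` term off the
sum gives the denominator of the SINR.
-/

theorem dotProduct_mulVec_of_forall_ne_eq_zero {m n R : Type*} [Fintype m] [Fintype n]
    [NonUnitalNonAssocSemiring R] {i : m} {j : n} {v : m → R} {w : n → R}
    (hv : ∀ k, k ≠ i → v k = 0) (hw : ∀ k, k ≠ j → w k = 0) (M : Matrix m n R) :
    v ⬝ᵥ M *ᵥ w = v i * (M i j * w j) := by
  rw [dotProduct, Fintype.sum_eq_single i fun k hk => by rw [hv k hk, zero_mul], mulVec,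
    dotProduct, Fintype.sum_eq_single j fun k hk => by rw [hw k hk, mul_zero]]

section RankOneUpdate

variable {ι : Type*} [Fintype ι] [DecidableEq ι]

theorem inv_add_vecMulVec {R : Type*} [CommRing R] {A : Matrix ι ι R} (hA : IsUnit A)
    {u v : ι → R} (huv : IsUnit (1 + v ⬝ᵥ A⁻¹ *ᵥ u)) :
    (A + vecMulVec u v)⁻¹ =
      A⁻¹ - Ring.inverse (1 + v ⬝ᵥ A⁻¹ *ᵥ u) • vecMulVec (A⁻¹ *ᵥ u) (v ᵥ* A⁻¹) := by
  have hAA : A * A⁻¹ = 1 := mul_nonsing_inv A ((isUnit_iff_isUnit_det A).mp hA)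
  set s := v ⬝ᵥ A⁻¹ *ᵥ u
  have hscalar : (1 + s) * Ring.inverse (1 + s) = 1 := Ring.mul_inverse_cancel _ huv
  have hleft : A * vecMulVec (A⁻¹ *ᵥ u) (v ᵥ* A⁻¹) = vecMulVec u (v ᵥ* A⁻¹) := by
    rw [mul_vecMulVec, mulVec_mulVec, hAA, one_mulVec]
  have hright : vecMulVec u v * vecMulVec (A⁻¹ *ᵥ u) (v ᵥ* A⁻¹) =
      s • vecMulVec u (v ᵥ* A⁻¹) := by
    rw [vecMulVec_mul_vecMulVec, vecMulVec_smul]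
  apply inv_eq_right_inv
  calc (A + vecMulVec u v) * (A⁻¹ - Ring.inverse (1 + s) • vecMulVec (A⁻¹ *ᵥ u) (v ᵥ* A⁻¹))
      = 1 + (1 - (1 + s) * Ring.inverse (1 + s)) • vecMulVec u (v ᵥ* A⁻¹) := by
        rw [add_mul, mul_sub, mul_sub, mul_smul_comm, mul_smul_comm, hleft, hright, hAA,
          vecMulVec_mul]
        module
    _ = 1 := by rw [hscalar, sub_self, zero_smul, add_zero]

variable {K : Type*} [Field K]

theorem inv_diagonal_add_vecMulVec_apply_self {d u v : ι → K} (hd : ∀ k, d k ≠ 0)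
    (huv : 1 + ∑ k, u k * v k / d k ≠ 0) (i : ι) :
    (diagonal d + vecMulVec u v)⁻¹ i i =
      (d i)⁻¹ * (1 - u i * v i / (d i * (1 + ∑ k, u k * v k / d k))) := by
  have hdiag : IsUnit (diagonal d) :=
    isUnit_diagonal.mpr (Pi.isUnit_iff.mpr fun k => (hd k).isUnit)
  have hinv : (diagonal d)⁻¹ = diagonal d⁻¹ :=
    inv_eq_right_inv (by simp [hd])
  have hdot : v ⬝ᵥ (diagonal d)⁻¹ *ᵥ u = ∑ k, u k * v k / d k := by
    rw [hinv, dotProduct]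
    exact Finset.sum_congr rfl fun k _ => by rw [mulVec_diagonal, Pi.inv_apply]; ring
  rw [inv_add_vecMulVec hdiag (hdot ▸ huv.isUnit), hdot, hinv, Ring.inverse_eq_inv']
  simp only [Matrix.sub_apply, Matrix.smul_apply, smul_eq_mul, vecMulVec_apply,
    mulVec_diagonal, vecMul_diagonal, diagonal_apply_eq, Pi.inv_apply]
  have hdi := hd i
  field_simp

theorem mul_one_add_sum_div_eq {d : ι → K} {i : ι} (hdi : d i ≠ 0) (a : ι → K) (c : K) :
    d i * (1 + ∑ k, c * a k / d k) =
      d i + c * a i + c * d i * ∑ k ∈ Finset.univ.erase i, a k / d k := by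
  rw [← Finset.add_sum_erase _ _ (Finset.mem_univ i)]
  simp only [mul_div_assoc, ← Finset.mul_sum]
  field_simp
  ring

theorem add_mul_add_mul_sum_erase_pos [LinearOrder K] [IsStrictOrderedRing K] {d a : ι → K} {c : K}
    (hd : ∀ k, 0 < d k) (ha : ∀ k, 0 ≤ a k) (hc : 0 ≤ c) (i : ι) :
    0 < d i + c * a i + c * d i * ∑ k ∈ Finset.univ.erase i, a k / d k := by
  rw [← mul_one_add_sum_div_eq (hd i).ne']
  have hsum : 0 ≤ ∑ k, c * a k / d k :=
    Finset.sum_nonneg fun k _ => div_nonneg (mul_nonneg hc (ha k)) (hd k).le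
  exact mul_pos (hd i) (by linarith)

theorem prop1_scheme2_sinr_general [StarRing K] (i : ι) {d : ι → K} (hd : ∀ k, d k ≠ 0)
    {h : ι → K} (hh : ∀ k, k ≠ i → h k = 0) (f : ι → K) (p₁ pᵤ : K)
    (hden : d i + pᵤ * (star (f i) * f i)
      + pᵤ * d i * ∑ k ∈ Finset.univ.erase i, star (f k) * f k / d k ≠ 0) :
    p₁ * (star h ⬝ᵥ ((pᵤ • vecMulVec f (star f) + diagonal d)⁻¹ *ᵥ h)) =
      p₁ * (star (h i) * h i) / d i
        * (1 - pᵤ * (star (f i) * f i)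
          / (d i + pᵤ * (star (f i) * f i)
            + pᵤ * d i * ∑ k ∈ Finset.univ.erase i, star (f k) * f k / d k)) := by
  have hterm (k : ι) : (pᵤ • f) k * star f k = pᵤ * (star (f k) * f k) := by
    rw [Pi.smul_apply, smul_eq_mul, Pi.star_apply, mul_assoc, mul_comm (f k)]
  have hstar (k : ι) (hk : k ≠ i) : star h k = 0 := by rw [Pi.star_apply, hh k hk, star_zero]
  rw [← mul_one_add_sum_div_eq (hd i) (fun k => star (f k) * f k) pᵤ] at hden ⊢
  have hsum : 1 + ∑ k, (pᵤ • f) k * star f k / d k ≠ 0 := by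
    simpa only [hterm] using right_ne_zero_of_mul hden
  rw [dotProduct_mulVec_of_forall_ne_eq_zero hstar hh, ← smul_vecMulVec, add_comm,
    inv_diagonal_add_vecMulVec_apply_self hd hsum]
  simp only [hterm]
  rw [Pi.star_apply]
  ring

end RankOneUpdate

/-- Proposition 1: UE1's SINR under linear interference cancellation (Scheme 2),
`γ_{1,QF2} = p₁ hᴴ (p_u f fᴴ + Γ)⁻¹ h
  = (p₁|h₁|²/σ₁²)(1 − p_u|f₁|²/(σ₁² + p_u|f₁|² + p_u σ₁² Σ_{i≥2} |fᵢ|²/(σᵢ²+qᵢ)))`,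
where `Γ = diag(σ₁², σ₂²+q₂, …, σ_{J+1}²+q_{J+1})` and `h = (h₁,0,…,0)ᵀ`. -/
theorem prop1_scheme2_sinr {J : ℕ}
    (σsq q : Fin (J + 1) → ℝ) (hσ : ∀ i, 0 < σsq i) (hq : ∀ i, 0 ≤ q i)
    (d : Fin (J + 1) → ℝ) (hd0 : d 0 = σsq 0) (hdi : ∀ i, i ≠ 0 → d i = σsq i + q i)
    (h f : Fin (J + 1) → ℂ) (hh : ∀ i, i ≠ 0 → h i = 0)
    (p1 pu : ℝ) (hp1 : 0 < p1) (hpu : 0 < pu) :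
    (p1 : ℂ) * (star h ⬝ᵥ
        (((pu : ℂ) • Matrix.vecMulVec f (star f)
            + Matrix.diagonal (fun i => (d i : ℂ)))⁻¹ *ᵥ h))
      = ((p1 * Complex.normSq (h 0) / σsq 0
          * (1 - pu * Complex.normSq (f 0)
              / (σsq 0 + pu * Complex.normSq (f 0)
                  + pu * σsq 0 * ∑ i ∈ Finset.univ.erase 0,
                      Complex.normSq (f i) / (σsq i + q i))) : ℝ) : ℂ) := by
  have hd (i) : 0 < d i := by
    obtain rfl | hi := eq_or_ne i 0
    · exact hd0 ▸ hσ 0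
    · exact hdi i hi ▸ add_pos_of_pos_of_nonneg (hσ i) (hq i)
  have hsum : ∑ i ∈ Finset.univ.erase 0, Complex.normSq (f i) / (σsq i + q i)
      = ∑ i ∈ Finset.univ.erase 0, Complex.normSq (f i) / d i :=
    Finset.sum_congr rfl fun i hi => by rw [hdi i (Finset.ne_of_mem_erase hi)]
  have hden := add_mul_add_mul_sum_erase_pos hd (fun i => Complex.normSq_nonneg (f i)) hpu.le 0
  have hnormSq (z : ℂ) : star z * z = (Complex.normSq z : ℂ) :=
    Complex.normSq_eq_conj_mul_self.symm
  rw [hsum, ← hd0, prop1_scheme2_sinr_general 0 (d := fun i => (d i : ℂ))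
    (fun i => Complex.ofReal_ne_zero.mpr (hd i).ne') hh f p1 pu
    (by simp only [hnormSq]; exact_mod_cast hden.ne')]
  simp only [hnormSq]
  push_cast
  rfl
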